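/- arXiv:1205.0543 — 2 statements merged into one kernel-verified Lean document; each statement's English description precedes it below -/
import Mathlib

section
/- Let S: ℝ×ℝ³ → ℝ be differentiable. For every (t,x), det(∂_t S(t,x) I₄ + D(x, ∇_x S(t,x))) = 0 if and only if ∂_t S(t,x) + h⁺(x, ∇_x S(t,x)) = 0 or ∂_t S(t,x) + h⁻(x, ∇_x S(t,x)) = 0; i.e. the WKB system admits a nontrivial leading amplitude exactly when S satisfies one of the two eikonal equations. -/
open Matrix Complex BigOperators

noncomputable section

/-- Points of `ℝ³` as functions `Fin 3 → ℝ`. -/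
abbrev V3 := Fin 3 → ℝ

/-- The three Dirac alpha matrices `α¹, α², α³`. -/
def alphaM : Fin 3 → Matrix (Fin 4) (Fin 4) ℂ :=
  ![!![0,0,0,1; 0,0,1,0; 0,1,0,0; 1,0,0,0],
    !![0,0,0,-I; 0,0,I,0; 0,-I,0,0; I,0,0,0],
    !![0,0,1,0; 0,0,0,-1; 1,0,0,0; 0,-1,0,0]]

/-- The Dirac beta matrix `β`. -/
def betaM : Matrix (Fin 4) (Fin 4) ℂ := !![1,0,0,0; 0,1,0,0; 0,0,-1,0; 0,0,0,-1]

/-- `α · v = v₁ α¹ + v₂ α² + v₃ α³` for `v ∈ ℝ³`. -/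
def alphaDot (v : V3) : Matrix (Fin 4) (Fin 4) ℂ := ∑ k, (v k : ℂ) • alphaM k

/-- The Dirac symbol `D(x,ξ) = α·(ξ − A(x)) + β + V(x) I₄`. -/
def DiracD (V : V3 → ℝ) (A : V3 → V3) (x ξ : V3) : Matrix (Fin 4) (Fin 4) ℂ :=
  alphaDot (ξ - A x) + betaM + (V x : ℂ) • 1

/-- `λ(x,ξ) = √(|ξ − A(x)|² + 1)`. -/
def lam (A : V3 → V3) (x ξ : V3) : ℝ := Real.sqrt ((∑ k, (ξ k - A x k)^2) + 1)

/-- `h^±(x,ξ) = ±λ(x,ξ) + V(x)`, with `s = ±1` the sign. -/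
def hpm (s : ℝ) (V : V3 → ℝ) (A : V3 → V3) (x ξ : V3) : ℝ := s * lam A x ξ + V x

/-!
By the Clifford relations between the Dirac matrices, `M = α·v + β` satisfies `M² = (|v|² + 1) I₄`,
so `(c I₄ + M)(c I₄ - M) = (c² - |v|² - 1) I₄`. Hence `c I₄ + M` is invertible when
`c² ≠ |v|² + 1`. Conversely, if `c² = |v|² + 1` and `c I₄ + M` were invertible, then `M = c I₄`;
since `M` is traceless this forces `c = 0` and `c I₄ + M = 0`, a contradiction. With
`c = ∂ₜS + V` and `v = ∇ₓS - A`, the condition `c² = λ²` says that `c = ±λ`.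
-/

theorem add_mul_self_of_anticomm {R : Type*} [NonUnitalNonAssocSemiring R] {a b : R}
    (h : a * b + b * a = 0) : (a + b) * (a + b) = a * a + b * b :=
  calc (a + b) * (a + b) = a * a + b * b + (a * b + b * a) := by
        simp only [add_mul, mul_add]; abel
    _ = a * a + b * b := by rw [h, add_zero]

section Clifford

variable {R A ι : Type*} [CommSemiring R] [Semiring A] [Algebra R A]

theorem sum_smul_anticomm {s : Finset ι} {γ : ι → A} {b : A}
    (h : ∀ i ∈ s, γ i * b + b * γ i = 0) (v : ι → R) :
    (∑ i ∈ s, v i • γ i) * b + b * ∑ i ∈ s, v i • γ i = 0 := by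
  rw [Finset.sum_mul, Finset.mul_sum, ← Finset.sum_add_distrib]
  refine Finset.sum_eq_zero fun i hi => ?_
  rw [smul_mul_assoc, mul_smul_comm, ← smul_add, h i hi, smul_zero]

theorem sum_smul_mul_self_of_anticomm {s : Finset ι} {γ : ι → A}
    (hsq : ∀ i ∈ s, γ i * γ i = 1)
    (hanti : (s : Set ι).Pairwise fun i j => γ i * γ j + γ j * γ i = 0) (v : ι → R) :
    (∑ i ∈ s, v i • γ i) * ∑ i ∈ s, v i • γ i = (∑ i ∈ s, v i ^ 2) • (1 : A) := by
  classical
  induction s using Finset.induction_on with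
  | empty => simp
  | insert j s hj ih =>
    have hcross : v j • γ j * ∑ i ∈ s, v i • γ i + (∑ i ∈ s, v i • γ i) * v j • γ j = 0 := by
      rw [add_comm]
      refine sum_smul_anticomm (fun i hi => ?_) v
      have hij : i ≠ j := ne_of_mem_of_not_mem hi hj
      have hγ := hanti (Finset.mem_insert_of_mem hi) (Finset.mem_insert_self j s) hij
      rw [mul_smul_comm, smul_mul_assoc, ← smul_add, hγ, smul_zero]
    have hhead : v j • γ j * v j • γ j = v j ^ 2 • (1 : A) := by
      rw [smul_mul_smul_comm, hsq j (Finset.mem_insert_self j s), sq]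
    have htail := ih (fun i hi => hsq i (Finset.mem_insert_of_mem hi))
      (hanti.mono (by simp))
    rw [Finset.sum_insert hj, Finset.sum_insert hj, add_mul_self_of_anticomm hcross, hhead, htail,
      add_smul]

end Clifford

theorem smul_one_add_mul_smul_one_sub {R A : Type*} [CommRing R] [Ring A] [Algebra R A] {a : A}
    {r : R} (ha : a * a = r • (1 : A)) (c : R) :
    (c • (1 : A) + a) * (c • (1 : A) - a) = (c ^ 2 - r) • (1 : A) := by
  have hcomm : Commute (c • (1 : A)) a := (Commute.one_left a).smul_left c
  rw [← hcomm.mul_self_sub_mul_self_eq, ha, smul_mul_smul_comm, mul_one, sub_smul, sq]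

theorem det_smul_one_add_eq_zero_iff_sq_eq {n R : Type*} [Fintype n] [DecidableEq n] [CommRing R]
    [IsDomain R] {M : Matrix n n R} {r : R} (hn : (Fintype.card n : R) ≠ 0)
    (htr : M.trace = 0) (hM : M * M = r • (1 : Matrix n n R)) (c : R) :
    (c • (1 : Matrix n n R) + M).det = 0 ↔ c ^ 2 = r := by
  have hfactor := smul_one_add_mul_smul_one_sub hM c
  constructor
  · intro hdet
    have hpow : (c ^ 2 - r) ^ Fintype.card n = 0 := by
      simpa [hdet] using (congrArg det hfactor).symm
    exact sub_eq_zero.mp (eq_zero_of_pow_eq_zero hpow)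
  · intro hc
    by_contra hdet
    rw [hc, sub_self, zero_smul] at hfactor
    have hregular : IsLeftRegular (c • (1 : Matrix n n R) + M) :=
      (isRegular_of_isLeftRegular_det (IsRegular.of_ne_zero hdet).left).left
    have hscalar : M = c • (1 : Matrix n n R) :=
      (sub_eq_zero.mp (hregular (hfactor.trans (mul_zero _).symm))).symm
    have hc0 : c = 0 := by simpa [hscalar, hn] using htr
    have : Nonempty n := not_isEmpty_iff.mp fun _ => hn (by simp)
    exact hdet (by simp [hscalar, hc0])

theorem alphaM_mul_self (k : Fin 3) : alphaM k * alphaM k = 1 := by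
  ext i j
  fin_cases k <;> fin_cases i <;> fin_cases j <;> simp [alphaM]

theorem betaM_mul_self : betaM * betaM = 1 := by
  ext i j
  fin_cases i <;> fin_cases j <;> simp [betaM]

theorem alphaM_anticomm {j k : Fin 3} (hjk : j ≠ k) :
    alphaM j * alphaM k + alphaM k * alphaM j = 0 := by
  rw [← eq_neg_iff_add_eq_zero]
  fin_cases j <;> fin_cases k <;> first
    | exact absurd rfl hjk
    | simp [alphaM]

theorem alphaM_betaM_anticomm (k : Fin 3) : alphaM k * betaM + betaM * alphaM k = 0 := by
  rw [← eq_neg_iff_add_eq_zero]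
  fin_cases k <;> simp [alphaM, betaM]

theorem trace_alphaM (k : Fin 3) : (alphaM k).trace = 0 := by
  fin_cases k <;> simp [alphaM, Matrix.trace, Fin.sum_univ_four]

theorem trace_betaM : betaM.trace = 0 := by
  simp [betaM, Matrix.trace, Fin.sum_univ_four]

theorem alphaDot_mul_self (v : V3) :
    alphaDot v * alphaDot v = (∑ k, (v k : ℂ) ^ 2) • (1 : Matrix (Fin 4) (Fin 4) ℂ) :=
  sum_smul_mul_self_of_anticomm (fun k _ => alphaM_mul_self k)
    (fun _ _ _ _ hjk => alphaM_anticomm hjk) _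

theorem alphaDot_betaM_anticomm (v : V3) : alphaDot v * betaM + betaM * alphaDot v = 0 :=
  sum_smul_anticomm (fun k _ => alphaM_betaM_anticomm k) _

theorem alphaDot_add_betaM_mul_self (v : V3) :
    (alphaDot v + betaM) * (alphaDot v + betaM) =
      (∑ k, (v k : ℂ) ^ 2 + 1) • (1 : Matrix (Fin 4) (Fin 4) ℂ) := by
  rw [add_mul_self_of_anticomm (alphaDot_betaM_anticomm v), alphaDot_mul_self, betaM_mul_self,
    add_smul, one_smul]

theorem trace_alphaDot_add_betaM (v : V3) : (alphaDot v + betaM).trace = 0 := by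
  simp [alphaDot, trace_sum, trace_alphaM, trace_betaM]

theorem lam_sq (A : V3 → V3) (x ξ : V3) : lam A x ξ ^ 2 = ∑ k, (ξ k - A x k) ^ 2 + 1 :=
  Real.sq_sqrt (by positivity)

theorem det_smul_one_add_DiracD_eq_zero_iff_sq_eq (V : V3 → ℝ) (A : V3 → V3) (x ξ : V3) (τ : ℝ) :
    ((τ : ℂ) • (1 : Matrix (Fin 4) (Fin 4) ℂ) + DiracD V A x ξ).det = 0 ↔
      (τ + V x) ^ 2 = lam A x ξ ^ 2 := by
  have hshift : (τ : ℂ) • (1 : Matrix (Fin 4) (Fin 4) ℂ) + DiracD V A x ξ =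
      ((τ : ℂ) + V x) • (1 : Matrix (Fin 4) (Fin 4) ℂ) + (alphaDot (ξ - A x) + betaM) := by
    rw [DiracD, add_smul]
    abel
  rw [hshift, det_smul_one_add_eq_zero_iff_sq_eq (by simp) (trace_alphaDot_add_betaM _)
    (alphaDot_add_betaM_mul_self _), lam_sq]
  simp only [Pi.sub_apply]
  norm_cast

theorem det_smul_one_add_DiracD_eq_zero_iff (V : V3 → ℝ) (A : V3 → V3) (x ξ : V3) (τ : ℝ) :
    ((τ : ℂ) • (1 : Matrix (Fin 4) (Fin 4) ℂ) + DiracD V A x ξ).det = 0 ↔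
      τ + hpm 1 V A x ξ = 0 ∨ τ + hpm (-1) V A x ξ = 0 := by
  have hplus : τ + hpm 1 V A x ξ = 0 ↔ τ + V x = -lam A x ξ := by
    rw [hpm]
    constructor <;> intro h <;> linarith
  have hminus : τ + hpm (-1) V A x ξ = 0 ↔ τ + V x = lam A x ξ := by
    rw [hpm]
    constructor <;> intro h <;> linarith
  rw [det_smul_one_add_DiracD_eq_zero_iff_sq_eq, sq_eq_sq_iff_eq_or_eq_neg, hplus, hminus, or_comm]

/-- for differentiable `S(t,x)`, `det(∂ₜS I₄ + D(x, ∇ₓS)) = 0` iff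
`∂ₜS + h⁺(x,∇ₓS) = 0` or `∂ₜS + h⁻(x,∇ₓS) = 0` (the eikonal equations). -/
theorem wkb_eikonal_iff (V : V3 → ℝ) (A : V3 → V3)
    (S : ℝ × V3 → ℝ) (hS : Differentiable ℝ S) (t : ℝ) (x : V3) :
    ((((fderiv ℝ S (t, x) (1, 0) : ℝ) : ℂ) • (1 : Matrix (Fin 4) (Fin 4) ℂ)
        + DiracD V A x (fun k => fderiv ℝ S (t, x) (0, Pi.single k 1))).det = 0
      ↔ fderiv ℝ S (t, x) (1, 0)
            + hpm 1 V A x (fun k => fderiv ℝ S (t, x) (0, Pi.single k 1)) = 0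
        ∨ fderiv ℝ S (t, x) (1, 0)
            + hpm (-1) V A x (fun k => fderiv ℝ S (t, x) (0, Pi.single k 1)) = 0) :=
  det_smul_one_add_DiracD_eq_zero_iff V A x _ _
end
end

section
/- Let h: ℝ³×ℝ³ → ℝ be C², let t ↦ (y(t), ξ(t)) be a C¹ curve, and let P, R: I → M₃(ℂ) be differentiable solutions of P′ = (∇_{ξy}h) P + (∇_{ξξ}h) R and R′ = −(∇_{yy}h) P − (∇_{yξ}h) R along the curve. Then the matrix-valued functions t ↦ P(t)ᵀR(t) − R(t)ᵀP(t) and t ↦ P(t)*R(t) − R(t)*P(t) (with * the conjugate transpose) are constant on I. -/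
open Matrix Complex BigOperators

noncomputable section

attribute [local instance] Matrix.normedAddCommGroup Matrix.normedSpace

/-- The coordinate direction `i` in the `y`-slot of `ℝ³ × ℝ³`. -/
def ey (i : Fin 3) : V3 × V3 := (Pi.single i 1, 0)

/-- The coordinate direction `i` in the `ξ`-slot of `ℝ³ × ℝ³`. -/
def eXi (i : Fin 3) : V3 × V3 := (0, Pi.single i 1)

/-- `(∇_{yy}h)_{ij} = ∂²h/∂y_i∂y_j`. -/
def Hyy (h : V3 × V3 → ℝ) (p : V3 × V3) : Matrix (Fin 3) (Fin 3) ℝ :=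
  Matrix.of fun i j => fderiv ℝ (fun q => fderiv ℝ h q (ey j)) p (ey i)

/-- `(∇_{yξ}h)_{ij} = ∂²h/∂y_i∂ξ_j`. -/
def Hyxi (h : V3 × V3 → ℝ) (p : V3 × V3) : Matrix (Fin 3) (Fin 3) ℝ :=
  Matrix.of fun i j => fderiv ℝ (fun q => fderiv ℝ h q (eXi j)) p (ey i)

/-- `(∇_{ξy}h)_{ij} = ∂²h/∂ξ_i∂y_j`, so that `∇_{ξy}h = (∇_{yξ}h)ᵀ` for `C²` functions. -/
def Hxiy (h : V3 × V3 → ℝ) (p : V3 × V3) : Matrix (Fin 3) (Fin 3) ℝ :=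
  Matrix.of fun i j => fderiv ℝ (fun q => fderiv ℝ h q (ey j)) p (eXi i)

/-- `(∇_{ξξ}h)_{ij} = ∂²h/∂ξ_i∂ξ_j`. -/
def Hxixi (h : V3 × V3 → ℝ) (p : V3 × V3) : Matrix (Fin 3) (Fin 3) ℝ :=
  Matrix.of fun i j => fderiv ℝ (fun q => fderiv ℝ h q (eXi j)) p (eXi i)

/-!
The system is the linearised Hamiltonian flow of `h`: its coefficients are blocks of the symmetric
Hessian. For any two solutions `(Q, S)` and `(P, R)` of such a system the derivative of
`QᵀR − SᵀP` vanishes identically, because the blocks cancel in pairs. Taking `(Q, S) = (P, R)` gives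
the first invariant. Since the coefficients are real, the entrywise conjugate of a solution is again
a solution, and taking it for `(Q, S)` gives the second.
-/

section MatrixCalculus

variable {𝕜 E 𝔸 l m n : Type*} [NontriviallyNormedField 𝕜] [NormedAddCommGroup E]
  [NormedSpace 𝕜 E] [NormedRing 𝔸] [NormedAlgebra 𝕜 𝔸] {s : Set 𝕜} {t : 𝕜}

lemma hasDerivWithinAt_matrix_iff {M : 𝕜 → Matrix m n E} {M' : Matrix m n E} :
    HasDerivWithinAt M M' s t ↔
      ∀ i j, HasDerivWithinAt (fun τ => M τ i j) (M' i j) s t := by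
  -- `hasDerivWithinAt_pi` needs normed factors, so for infinite index types we go through the
  -- little-o relation of topological vector spaces.
  simp only [HasDerivWithinAt, HasDerivAtFilter, hasFDerivAtFilter_iff_isLittleOTVS]
  exact Asymptotics.isLittleOTVS_pi.trans (forall_congr' fun _ => Asymptotics.isLittleOTVS_pi)

lemma hasDerivWithinAt_matrix_transpose {M : 𝕜 → Matrix m n E} {M' : Matrix m n E}
    (hM : HasDerivWithinAt M M' s t) : HasDerivWithinAt (fun τ => (M τ)ᵀ) M'ᵀ s t :=
  hasDerivWithinAt_matrix_iff.2 fun i j => hasDerivWithinAt_matrix_iff.1 hM j i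

lemma hasDerivWithinAt_matrix_sub {M N : 𝕜 → Matrix m n E} {M' N' : Matrix m n E}
    (hM : HasDerivWithinAt M M' s t) (hN : HasDerivWithinAt N N' s t) :
    HasDerivWithinAt (fun τ => M τ - N τ) (M' - N') s t :=
  hasDerivWithinAt_matrix_iff.2 fun i j =>
    (hasDerivWithinAt_matrix_iff.1 hM i j).fun_sub (hasDerivWithinAt_matrix_iff.1 hN i j)

lemma hasDerivWithinAt_matrix_map_star [StarRing 𝕜] [TrivialStar 𝕜] [StarAddMonoid E]
    [ContinuousStar E] [StarModule 𝕜 E] {M : 𝕜 → Matrix m n E} {M' : Matrix m n E}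
    (hM : HasDerivWithinAt M M' s t) :
    HasDerivWithinAt (fun τ => (M τ).map star) (M'.map star) s t :=
  hasDerivWithinAt_matrix_iff.2 fun i j => (hasDerivWithinAt_matrix_iff.1 hM i j).star

lemma hasDerivWithinAt_matrix_mul [Fintype m] {M : 𝕜 → Matrix l m 𝔸} {N : 𝕜 → Matrix m n 𝔸}
    {M' : Matrix l m 𝔸} {N' : Matrix m n 𝔸}
    (hM : HasDerivWithinAt M M' s t) (hN : HasDerivWithinAt N N' s t) :
    HasDerivWithinAt (fun τ => M τ * N τ) (M' * N t + M t * N') s t := by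
  rw [hasDerivWithinAt_matrix_iff] at hM hN ⊢
  intro i j
  simp only [Matrix.add_apply, Matrix.mul_apply, ← Finset.sum_add_distrib]
  exact HasDerivWithinAt.fun_sum fun k _ => (hM i k).fun_mul (hN k j)

end MatrixCalculus

lemma eq_of_hasDerivWithinAt_zero_of_ordConnected {E : Type*} [NormedAddCommGroup E]
    [NormedSpace ℝ E] {I : Set ℝ} (hI : I.OrdConnected) {f : ℝ → E}
    (hf : ∀ t ∈ I, HasDerivWithinAt f 0 I t) {t₁ t₂ : ℝ} (ht₁ : t₁ ∈ I) (ht₂ : t₂ ∈ I) :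
    f t₁ = f t₂ := by
  have norm_sub_le : ‖f t₁ - f t₂‖ ≤ 0 * ‖t₁ - t₂‖ :=
    hI.convex.norm_image_sub_le_of_norm_hasDerivWithin_le hf (fun _ _ => norm_zero.le) ht₂ ht₁
  rwa [zero_mul, norm_le_zero_iff, sub_eq_zero] at norm_sub_le

section HamiltonianSystem

lemma hamiltonian_wronskian_deriv_eq_zero {K k m n : Type*} [CommRing K] [Fintype n]
    {A B C : Matrix n n K} (hB : B.IsSymm) (hC : C.IsSymm)
    (Q S : Matrix n k K) (P R : Matrix n m K) :
    (A * Q + B * S)ᵀ * R + Qᵀ * (-(C * P) - Aᵀ * R)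
      - ((-(C * Q) - Aᵀ * S)ᵀ * P + Sᵀ * (A * P + B * R)) = 0 := by
  simp only [transpose_add, transpose_sub, transpose_neg, transpose_mul, transpose_transpose,
    hB.eq, hC.eq, Matrix.add_mul, Matrix.sub_mul, Matrix.neg_mul, Matrix.mul_add, Matrix.mul_sub,
    Matrix.mul_neg, Matrix.mul_assoc]
  abel

variable {𝔸 k m n : Type*} [NormedCommRing 𝔸] [NormedAlgebra ℝ 𝔸] [Fintype n]

/-- `(P, R)` solves the linear Hamiltonian system `P' = A P + B R`, `R' = -C P - Aᵀ R` on `I`, where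
derivatives are taken within `I`. The columns of `P` and `R` are the positions and momenta of a
family of solutions. The symmetry of `B` and `C` that makes the system Hamiltonian is not part of
the definition. -/
structure IsHamiltonianSolutionOn (A B C : ℝ → Matrix n n 𝔸) (P R : ℝ → Matrix n m 𝔸)
    (I : Set ℝ) : Prop where
  hasDerivWithinAt_fst : ∀ t ∈ I, HasDerivWithinAt P (A t * P t + B t * R t) I t
  hasDerivWithinAt_snd : ∀ t ∈ I, HasDerivWithinAt R (-(C t * P t) - (A t)ᵀ * R t) I t

namespace IsHamiltonianSolutionOn

variable {A B C : ℝ → Matrix n n 𝔸} {I : Set ℝ} {P R : ℝ → Matrix n m 𝔸}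

lemma hasDerivWithinAt_wronskian {Q S : ℝ → Matrix n k 𝔸}
    (hQS : IsHamiltonianSolutionOn A B C Q S I) (hPR : IsHamiltonianSolutionOn A B C P R I)
    {t : ℝ} (ht : t ∈ I) (hB : (B t).IsSymm) (hC : (C t).IsSymm) :
    HasDerivWithinAt (fun τ => (Q τ)ᵀ * R τ - (S τ)ᵀ * P τ) 0 I t := by
  have hQ := hasDerivWithinAt_matrix_transpose (hQS.hasDerivWithinAt_fst t ht)
  have hS := hasDerivWithinAt_matrix_transpose (hQS.hasDerivWithinAt_snd t ht)
  rw [← hamiltonian_wronskian_deriv_eq_zero (A := A t) hB hC (Q t) (S t) (P t) (R t)]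
  exact hasDerivWithinAt_matrix_sub
    (hasDerivWithinAt_matrix_mul hQ (hPR.hasDerivWithinAt_snd t ht))
    (hasDerivWithinAt_matrix_mul hS (hPR.hasDerivWithinAt_fst t ht))

lemma wronskian_eq {Q S : ℝ → Matrix n k 𝔸} (hQS : IsHamiltonianSolutionOn A B C Q S I)
    (hPR : IsHamiltonianSolutionOn A B C P R I) (hI : I.OrdConnected)
    (hB : ∀ t ∈ I, (B t).IsSymm) (hC : ∀ t ∈ I, (C t).IsSymm)
    {t₁ t₂ : ℝ} (ht₁ : t₁ ∈ I) (ht₂ : t₂ ∈ I) :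
    (Q t₁)ᵀ * R t₁ - (S t₁)ᵀ * P t₁ = (Q t₂)ᵀ * R t₂ - (S t₂)ᵀ * P t₂ := by
  ext i j
  exact eq_of_hasDerivWithinAt_zero_of_ordConnected
    (f := fun t => ((Q t)ᵀ * R t - (S t)ᵀ * P t) i j) hI
    (fun t ht => hasDerivWithinAt_matrix_iff.1
      (hQS.hasDerivWithinAt_wronskian hPR ht (hB t ht) (hC t ht)) i j) ht₁ ht₂

lemma map_star [StarRing 𝔸] [ContinuousStar 𝔸] [StarModule ℝ 𝔸]
    (hPR : IsHamiltonianSolutionOn A B C P R I) :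
    IsHamiltonianSolutionOn (fun t => (A t).map star) (fun t => (B t).map star)
      (fun t => (C t).map star) (fun t => (P t).map star) (fun t => (R t).map star) I where
  hasDerivWithinAt_fst t ht := by
    convert hasDerivWithinAt_matrix_map_star (hPR.hasDerivWithinAt_fst t ht) using 1
    ext i j
    simp [Matrix.mul_apply]
  hasDerivWithinAt_snd t ht := by
    convert hasDerivWithinAt_matrix_map_star (hPR.hasDerivWithinAt_snd t ht) using 1
    ext i j
    simp [Matrix.mul_apply]

end IsHamiltonianSolutionOn

end HamiltonianSystem

lemma map_algebraMap_map_star {K L m n : Type*} [CommSemiring K] [StarRing K] [TrivialStar K]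
    [Semiring L] [StarRing L] [Algebra K L] [StarModule K L] (M : Matrix m n K) :
    (M.map (algebraMap K L)).map star = M.map (algebraMap K L) := by
  ext i j
  simp [← algebraMap_star_comm]

section Hessian

variable {E F m n : Type*} [NormedAddCommGroup E] [NormedSpace ℝ E] [NormedAddCommGroup F]
  [NormedSpace ℝ F] {p : E}

lemma fderiv_fderiv_apply_comm {h : E → F} (hh : ContDiffAt ℝ 2 h p) (u v : E) :
    fderiv ℝ (fun q => fderiv ℝ h q u) p v = fderiv ℝ (fun q => fderiv ℝ h q v) p u := by
  have differentiableAt_fderiv : DifferentiableAt ℝ (fderiv ℝ h) p :=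
    (hh.fderiv_right (m := 1) (by norm_num)).differentiableAt one_ne_zero
  have fderiv_apply (w : E) :
      fderiv ℝ (fun q => fderiv ℝ h q w) p = (fderiv ℝ (fderiv ℝ h) p).flip w := by
    simp [fderiv_clm_apply differentiableAt_fderiv (differentiableAt_const w)]
  simpa only [fderiv_apply, ContinuousLinearMap.flip_apply] using
    hh.isSymmSndFDerivAt (by simp) v u

/-- The matrix of mixed second derivatives `∂_{u i} ∂_{v j} h` at `p` along two families of
directions. The outer derivative is the one along `u`. For the two halves of a basis of `ℝⁿ × ℝⁿ`
these are the Hessian blocks of `h`. -/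
def hessianBlock (h : E → ℝ) (u : m → E) (v : n → E) (p : E) : Matrix m n ℝ :=
  Matrix.of fun i j => fderiv ℝ (fun q => fderiv ℝ h q (v j)) p (u i)

lemma hessianBlock_transpose {h : E → ℝ} (hh : ContDiffAt ℝ 2 h p) (u : m → E) (v : n → E) :
    (hessianBlock h u v p)ᵀ = hessianBlock h v u p :=
  Matrix.ext fun i j => fderiv_fderiv_apply_comm hh (v i) (u j)

end Hessian

theorem symplectic_invariants_constant_general {E 𝔸 m n : Type*} [NormedAddCommGroup E]
    [NormedSpace ℝ E] [NormedCommRing 𝔸] [NormedAlgebra ℝ 𝔸] [StarRing 𝔸] [ContinuousStar 𝔸]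
    [StarModule ℝ 𝔸] [Fintype n] {h : E → ℝ} {I : Set ℝ} (hI : I.OrdConnected)
    {z : ℝ → E} (hh : ∀ t ∈ I, ContDiffAt ℝ 2 h (z t)) (u v : n → E) {P R : ℝ → Matrix n m 𝔸}
    (hP : ∀ t ∈ I, HasDerivWithinAt P
      ((hessianBlock h v u (z t)).map (algebraMap ℝ 𝔸) * P t
        + (hessianBlock h v v (z t)).map (algebraMap ℝ 𝔸) * R t) I t)
    (hR : ∀ t ∈ I, HasDerivWithinAt R
      (-((hessianBlock h u u (z t)).map (algebraMap ℝ 𝔸) * P t)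
        - (hessianBlock h u v (z t)).map (algebraMap ℝ 𝔸) * R t) I t)
    {t₁ t₂ : ℝ} (ht₁ : t₁ ∈ I) (ht₂ : t₂ ∈ I) :
    ((P t₁)ᵀ * R t₁ - (R t₁)ᵀ * P t₁ = (P t₂)ᵀ * R t₂ - (R t₂)ᵀ * P t₂) ∧
    ((P t₁)ᴴ * R t₁ - (R t₁)ᴴ * P t₁ = (P t₂)ᴴ * R t₂ - (R t₂)ᴴ * P t₂) := by
  let H (a b : n → E) (t : ℝ) : Matrix n n 𝔸 := (hessianBlock h a b (z t)).map (algebraMap ℝ 𝔸)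
  have H_transpose (a b : n → E) : ∀ t ∈ I, (H a b t)ᵀ = H b a t := fun t ht => by
    simp only [H, ← transpose_map, hessianBlock_transpose (hh t ht)]
  have solution : IsHamiltonianSolutionOn (H v u) (H v v) (H u u) P R I :=
    ⟨hP, fun t ht => H_transpose v u t ht ▸ hR t ht⟩
  have conj_solution : IsHamiltonianSolutionOn (H v u) (H v v) (H u u)
      (fun t => (P t).map star) (fun t => (R t).map star) I := by
    simpa only [H, map_algebraMap_map_star] using solution.map_star
  exact ⟨solution.wronskian_eq solution hI (H_transpose v v) (H_transpose u u) ht₁ ht₂,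
    conj_solution.wronskian_eq solution hI (H_transpose v v) (H_transpose u u) ht₁ ht₂⟩

/-- for solutions `P, R` of the linear system
`P' = (∇_{ξy}h)P + (∇_{ξξ}h)R`, `R' = −(∇_{yy}h)P − (∇_{yξ}h)R` along a `C¹` curve on an
interval `I`, the functions `PᵀR − RᵀP` and `P*R − R*P` are constant on `I`. -/
theorem symplectic_invariants_constant (h : V3 × V3 → ℝ) (hh : ContDiff ℝ 2 h)
    (I : Set ℝ) (hI : I.OrdConnected)
    (y ξ : ℝ → V3) (hcurve : ContDiffOn ℝ 1 (fun t => (y t, ξ t)) I)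
    (P R : ℝ → Matrix (Fin 3) (Fin 3) ℂ)
    (hP : ∀ t ∈ I, HasDerivWithinAt P
      ((Hxiy h (y t, ξ t)).map Complex.ofReal * P t
        + (Hxixi h (y t, ξ t)).map Complex.ofReal * R t) I t)
    (hR : ∀ t ∈ I, HasDerivWithinAt R
      (-((Hyy h (y t, ξ t)).map Complex.ofReal * P t)
        - (Hyxi h (y t, ξ t)).map Complex.ofReal * R t) I t) :
    ∀ t₁ ∈ I, ∀ t₂ ∈ I,
      ((P t₁)ᵀ * R t₁ - (R t₁)ᵀ * P t₁ = (P t₂)ᵀ * R t₂ - (R t₂)ᵀ * P t₂) ∧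
      ((P t₁)ᴴ * R t₁ - (R t₁)ᴴ * P t₁ = (P t₂)ᴴ * R t₂ - (R t₂)ᴴ * P t₂) := by
  intro t₁ ht₁ t₂ ht₂
  exact symplectic_invariants_constant_general hI (fun t _ => hh.contDiffAt) ey eXi hP hR ht₁ ht₂
end
end
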